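/- arXiv:2312.08969 — 4 statements merged into one kernel-verified Lean document; each statement's English description precedes it below -/
import Mathlib

section
/- Let u : ℝ × ℝ → ℝ be a smooth solution of the mKdV equation u_t − 6u²u_x + u_xxx = 0, let ζ ∈ ℝ, and let p, q : ℝ × ℝ → ℂ be smooth functions satisfying the Lax system p_x = iζp + uq, q_x = −iζq + up, p_t = (4iζ³ + 2iζu²)p + (4ζ²u − 2iζu_x + 2u³ − u_xx)q, q_t = (4ζ²u + 2iζu_x + 2u³ − u_xx)p + (−4iζ³ − 2iζu²)q. If p(x,t)² ≠ q(x,t)² for every (x,t) ∈ ℝ × ℝ, then the function û := u − 4iζ p q / (p² − q²) is a smooth (complex-valued) solution of the mKdV equation: û_t − 6û²û_x + û_xxx = 0 on ℝ × ℝ. -/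
noncomputable section

/-- Partial derivative in the first (spatial) variable for real-valued fields. -/
def ux (u : ℝ × ℝ → ℝ) (p : ℝ × ℝ) : ℝ := deriv (fun y => u (y, p.2)) p.1

/-- Partial derivative in the second (temporal) variable for real-valued fields. -/
def ut (u : ℝ × ℝ → ℝ) (p : ℝ × ℝ) : ℝ := deriv (fun s => u (p.1, s)) p.2

/-- Partial derivative in the first (spatial) variable for complex-valued fields. -/
def cx (f : ℝ × ℝ → ℂ) (p : ℝ × ℝ) : ℂ := deriv (fun y => f (y, p.2)) p.1

/-- Partial derivative in the second (temporal) variable for complex-valued fields. -/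
def ct (f : ℝ × ℝ → ℂ) (p : ℝ × ℝ) : ℂ := deriv (fun s => f (p.1, s)) p.2

/-!
Put `κ = iζ`. The ratio `v = (p + q) / (p - q)` projectivises the Lax system to the pair of Riccati
equations `IsRiccatiSolution κ u v`, the first of which reads `v_x = κ + 2uv - κv²`, and the Darboux
transform becomes `û = u - κ(v - v⁻¹)`. In these terms the Darboux transform only flips the sign of
the spectral parameter: the *same* `v` solves the Riccati pair with `(u, κ)` replaced by `(û, -κ)`.
Finally, `v_xt = v_tx` for a nonvanishing solution `v` of the Riccati pair of a potential says
that `2v` times the mKdV expression of that potential vanishes; apply this to `û`.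
-/

section

variable {u v p q f : ℝ × ℝ → ℂ} {κ ζ : ℂ} {x t : ℝ}

lemma hasDerivAt_cx (hf : DifferentiableAt ℝ f (x, t)) :
    HasDerivAt (fun y => f (y, t)) (cx f (x, t)) x :=
  (hf.comp x (f := fun y => (y, t)) (by fun_prop)).hasDerivAt

lemma hasDerivAt_ct (hf : DifferentiableAt ℝ f (x, t)) :
    HasDerivAt (fun s => f (x, s)) (ct f (x, t)) t :=
  (hf.comp t (f := fun s => (x, s)) (by fun_prop)).hasDerivAt

lemma cx_eq_fderiv (hf : Differentiable ℝ f) : cx f = fun w => fderiv ℝ f w (1, 0) :=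
  funext fun w => ((hf w).hasFDerivAt.comp_hasDerivAt w.1
    ((hasDerivAt_id w.1).prodMk (hasDerivAt_const w.1 w.2))).deriv

lemma ct_eq_fderiv (hf : Differentiable ℝ f) : ct f = fun w => fderiv ℝ f w (0, 1) :=
  funext fun w => ((hf w).hasFDerivAt.comp_hasDerivAt w.2
    ((hasDerivAt_const w.2 w.1).prodMk (hasDerivAt_id w.2))).deriv

lemma contDiff_cx {m n : WithTop ℕ∞} (hf : ContDiff ℝ n f) (hmn : m + 1 ≤ n) :
    ContDiff ℝ m (cx f) := by
  have hn : n ≠ 0 := by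
    rintro rfl
    simp at hmn
  rw [cx_eq_fderiv (hf.differentiable hn)]
  exact (hf.fderiv_right hmn).clm_apply contDiff_const

lemma cx_ct_eq_ct_cx (hf : ContDiff ℝ 2 f) : cx (ct f) = ct (cx f) := by
  have hf₁ : Differentiable ℝ f := hf.differentiable (by norm_num)
  have hf₂ : Differentiable ℝ (fderiv ℝ f) :=
    (hf.fderiv_right (m := 1) (by norm_num)).differentiable (by norm_num)
  rw [ct_eq_fderiv hf₁, cx_eq_fderiv hf₁, cx_eq_fderiv (hf₂.clm_apply (differentiable_const _)),
    ct_eq_fderiv (hf₂.clm_apply (differentiable_const _))]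
  funext w
  have hsymm : IsSymmSndFDerivAt ℝ f w := hf.contDiffAt.isSymmSndFDerivAt (by simp)
  simpa [fderiv_clm_apply (hf₂ w) (differentiableAt_const _)] using hsymm.eq (1, 0) (0, 1)

lemma cx_ofReal (g : ℝ × ℝ → ℝ) : cx (fun w => (g w : ℂ)) = fun w => (ux g w : ℂ) := by
  funext w
  by_cases hg : DifferentiableAt ℝ (fun y => g (y, w.2)) w.1
  · exact hg.hasDerivAt.ofReal_comp.deriv
  · have hg_coe : ¬ DifferentiableAt ℝ (fun y => (g (y, w.2) : ℂ)) w.1 := fun h =>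
      hg (Complex.reCLM.differentiableAt.comp w.1 h)
    simp only [cx, ux, deriv_zero_of_not_differentiableAt hg,
      deriv_zero_of_not_differentiableAt hg_coe, Complex.ofReal_zero]

lemma contDiff_div {𝕜 𝕂 E : Type*} [NontriviallyNormedField 𝕜] [NormedField 𝕂] [NormedAlgebra 𝕜 𝕂]
    [NormedAddCommGroup E] [NormedSpace 𝕜 E] {a b : E → 𝕂} {n : WithTop ℕ∞}
    (ha : ContDiff 𝕜 n a) (hb : ContDiff 𝕜 n b) (hb₀ : ∀ y, b y ≠ 0) :
    ContDiff 𝕜 n fun y => a y / b y := by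
  simpa only [div_eq_mul_inv, Pi.inv_apply] using ha.mul (hb.inv hb₀)

lemma hasDerivAt_div_of_linear_system {𝕜 𝕂 : Type*} [NontriviallyNormedField 𝕜]
    [NontriviallyNormedField 𝕂] [NormedAlgebra 𝕜 𝕂] {a b : 𝕜 → 𝕂} {α β γ δ : 𝕂} {y : 𝕜}
    (ha : HasDerivAt a (α * a y + β * b y) y) (hb : HasDerivAt b (γ * a y + δ * b y) y)
    (hy : b y ≠ 0) :
    HasDerivAt (fun z => a z / b z) (β + (α - δ) * (a y / b y) - γ * (a y / b y) ^ 2) y := by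
  refine (ha.fun_div hb hy).congr_deriv ?_
  field_simp
  ring

/-- `u` solves the defocusing mKdV equation `u_t - 6u²u_x + u_xxx = 0`. -/
def IsMKdVSolution (u : ℝ × ℝ → ℂ) : Prop :=
  ∀ w, ct u w - 6 * u w ^ 2 * cx u w + cx (cx (cx u)) w = 0

/-- `(p, q)` solves the Lax system of the mKdV equation with potential `u` and spectral
parameter `ζ`, both allowed to be complex. -/
structure IsLaxSolution (ζ : ℂ) (u p q : ℝ × ℝ → ℂ) : Prop where
  cx_fst : ∀ w, cx p w = Complex.I * ζ * p w + u w * q w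
  cx_snd : ∀ w, cx q w = -(Complex.I * ζ) * q w + u w * p w
  ct_fst : ∀ w, ct p w =
    (4 * Complex.I * ζ ^ 3 + 2 * Complex.I * ζ * u w ^ 2) * p w +
    (4 * ζ ^ 2 * u w - 2 * Complex.I * ζ * cx u w + 2 * u w ^ 3 - cx (cx u) w) * q w
  ct_snd : ∀ w, ct q w =
    (4 * ζ ^ 2 * u w + 2 * Complex.I * ζ * cx u w + 2 * u w ^ 3 - cx (cx u) w) * p w +
    (-(4 * Complex.I * ζ ^ 3) - 2 * Complex.I * ζ * u w ^ 2) * q w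

/-- `v` solves the pair of Riccati equations satisfied by the ratio `(p + q) / (p - q)` of a
solution of the Lax system with potential `u` and spectral parameter `ζ`, where `κ = iζ`. -/
structure IsRiccatiSolution (κ : ℂ) (u v : ℝ × ℝ → ℂ) : Prop where
  cx_eq : ∀ w, cx v w = κ + 2 * u w * v w - κ * v w ^ 2
  ct_eq : ∀ w, ct v w =
    2 * κ * u w ^ 2 - 4 * κ ^ 3 + 2 * κ * cx u w
    + 2 * (2 * u w ^ 3 - 4 * κ ^ 2 * u w - cx (cx u) w) * v w
    - (2 * κ * u w ^ 2 - 4 * κ ^ 3 - 2 * κ * cx u w) * v w ^ 2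

/-- The Darboux transform of the potential `u` generated by `(p, q)` with spectral parameter `ζ`.
It is meaningful only where `p² ≠ q²`. -/
def darbouxTransform (ζ : ℂ) (u p q : ℝ × ℝ → ℂ) (w : ℝ × ℝ) : ℂ :=
  u w - 4 * Complex.I * ζ * p w * q w / (p w ^ 2 - q w ^ 2)

/-- The Bäcklund transform of the potential `u` generated by `v`: the Darboux transform expressed
through a solution `v` of the Riccati pair. It is meaningful only where `v ≠ 0`. -/
def backlundTransform (κ : ℂ) (u v : ℝ × ℝ → ℂ) (w : ℝ × ℝ) : ℂ :=
  u w - κ * (v w - (v w)⁻¹)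

lemma darbouxTransform_eq_backlundTransform (hne : ∀ w, p w ^ 2 ≠ q w ^ 2) :
    darbouxTransform ζ u p q =
      backlundTransform (Complex.I * ζ) u (fun w => (p w + q w) / (p w - q w)) := by
  funext w
  have hfactor : (p w + q w) * (p w - q w) ≠ 0 := by
    rw [← sq_sub_sq]
    exact sub_ne_zero.mpr (hne w)
  have hadd := left_ne_zero_of_mul hfactor
  have hsub := right_ne_zero_of_mul hfactor
  simp only [darbouxTransform, backlundTransform, sq_sub_sq]
  field_simp
  ring

lemma contDiff_darbouxTransform {n : WithTop ℕ∞} (hu : ContDiff ℝ n u) (hp : ContDiff ℝ n p)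
    (hq : ContDiff ℝ n q) (hne : ∀ w, p w ^ 2 ≠ q w ^ 2) :
    ContDiff ℝ n (darbouxTransform ζ u p q) :=
  hu.sub (contDiff_div ((contDiff_const.mul hp).mul hq) ((hp.pow 2).sub (hq.pow 2))
    fun w => sub_ne_zero.mpr (hne w))

theorem IsLaxSolution.isRiccatiSolution (h : IsLaxSolution ζ u p q) (hp : Differentiable ℝ p)
    (hq : Differentiable ℝ q) (hne : ∀ w, p w ≠ q w) :
    IsRiccatiSolution (Complex.I * ζ) u (fun w => (p w + q w) / (p w - q w)) where
  cx_eq := fun (x, t) => by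
    have hpx := hasDerivAt_cx (hp (x, t))
    have hqx := hasDerivAt_cx (hq (x, t))
    rw [h.cx_fst] at hpx
    rw [h.cx_snd] at hqx
    refine (hasDerivAt_div_of_linear_system (α := u (x, t)) (β := Complex.I * ζ)
      (γ := Complex.I * ζ) (δ := -u (x, t)) ((hpx.fun_add hqx).congr_deriv (by ring))
      ((hpx.fun_sub hqx).congr_deriv (by ring)) (sub_ne_zero.mpr (hne _))).deriv.trans ?_
    ring
  ct_eq := fun (x, t) => by
    have hpt := hasDerivAt_ct (hp (x, t))
    have hqt := hasDerivAt_ct (hq (x, t))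
    rw [h.ct_fst] at hpt
    rw [h.ct_snd] at hqt
    set A := 4 * Complex.I * ζ ^ 3 + 2 * Complex.I * ζ * u (x, t) ^ 2 with hA
    set C := 4 * ζ ^ 2 * u (x, t) + 2 * u (x, t) ^ 3 - cx (cx u) (x, t) with hC
    set D := 2 * Complex.I * ζ * cx u (x, t) with hD
    refine (hasDerivAt_div_of_linear_system (α := C) (β := A + D) (γ := A - D) (δ := -C)
      ((hpt.fun_add hqt).congr_deriv (by ring)) ((hpt.fun_sub hqt).congr_deriv (by ring))
      (sub_ne_zero.mpr (hne _))).deriv.trans ?_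
    simp only [hA, hC, hD, mul_pow, Complex.I_sq, Complex.I_pow_three]
    ring

namespace IsRiccatiSolution

lemma hasDerivAt_sub_inv (h : IsRiccatiSolution κ u v) (hv : DifferentiableAt ℝ v (x, t))
    (hv₀ : v (x, t) ≠ 0) :
    HasDerivAt (fun y => v (y, t) - (v (y, t))⁻¹)
      ((v (x, t) + (v (x, t))⁻¹) * (u (x, t) + backlundTransform κ u v (x, t))) x := by
  have hvx := hasDerivAt_cx hv
  refine (hvx.fun_sub (hvx.fun_inv hv₀)).congr_deriv ?_
  simp only [h.cx_eq, backlundTransform]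
  field_simp
  ring

lemma hasDerivAt_add_inv (h : IsRiccatiSolution κ u v) (hv : DifferentiableAt ℝ v (x, t))
    (hv₀ : v (x, t) ≠ 0) :
    HasDerivAt (fun y => v (y, t) + (v (y, t))⁻¹)
      ((v (x, t) - (v (x, t))⁻¹) * (u (x, t) + backlundTransform κ u v (x, t))) x := by
  have hvx := hasDerivAt_cx hv
  refine (hvx.fun_add (hvx.fun_inv hv₀)).congr_deriv ?_
  simp only [h.cx_eq, backlundTransform]
  field_simp
  ring

lemma cx_backlundTransform (h : IsRiccatiSolution κ u v) (hu : Differentiable ℝ u)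
    (hv : Differentiable ℝ v) (hv₀ : ∀ w, v w ≠ 0) :
    cx (backlundTransform κ u v) = fun w =>
      cx u w - κ * ((v w + (v w)⁻¹) * (u w + backlundTransform κ u v w)) :=
  funext fun (x, t) => ((hasDerivAt_cx (hu (x, t))).fun_sub
    ((h.hasDerivAt_sub_inv (hv _) (hv₀ _)).const_mul κ)).deriv

lemma cx_cx_backlundTransform (h : IsRiccatiSolution κ u v) (hu : Differentiable ℝ u)
    (hux : Differentiable ℝ (cx u)) (hv : Differentiable ℝ v) (hv₀ : ∀ w, v w ≠ 0) (w : ℝ × ℝ) :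
    cx (cx (backlundTransform κ u v)) w =
      cx (cx u) w
      - κ * ((v w - (v w)⁻¹) * (u w + backlundTransform κ u v w) ^ 2
        + (v w + (v w)⁻¹) * (cx u w + cx (backlundTransform κ u v) w)) := by
  obtain ⟨x, t⟩ := w
  have hb : Differentiable ℝ (backlundTransform κ u v) :=
    hu.sub ((hv.sub (hv.inv hv₀)).const_mul κ)
  have hsum := (hasDerivAt_cx (hu (x, t))).fun_add (hasDerivAt_cx (hb (x, t)))
  have hxx := (hasDerivAt_cx (hux (x, t))).fun_sub
    (((h.hasDerivAt_add_inv (hv (x, t)) (hv₀ (x, t))).fun_mul hsum).const_mul κ)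
  conv_lhs => rw [h.cx_backlundTransform hu hv hv₀]
  refine hxx.deriv.trans ?_
  ring

theorem neg_backlundTransform (h : IsRiccatiSolution κ u v) (hu : Differentiable ℝ u)
    (hux : Differentiable ℝ (cx u)) (hv : Differentiable ℝ v) (hv₀ : ∀ w, v w ≠ 0) :
    IsRiccatiSolution (-κ) (backlundTransform κ u v) v where
  cx_eq w := by
    have := hv₀ w
    rw [h.cx_eq, backlundTransform]
    field_simp
    ring
  ct_eq w := by
    have := hv₀ w
    rw [h.ct_eq, h.cx_cx_backlundTransform hu hux hv hv₀, h.cx_backlundTransform hu hv hv₀]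
    simp only [backlundTransform]
    field_simp
    ring

lemma ct_cx (h : IsRiccatiSolution κ u v) (hu : Differentiable ℝ u) (hv : Differentiable ℝ v)
    (w : ℝ × ℝ) :
    ct (cx v) w = 2 * ct u w * v w + 2 * (u w - κ * v w) * ct v w := by
  obtain ⟨x, t⟩ := w
  have hut := hasDerivAt_ct (hu (x, t))
  have hvt := hasDerivAt_ct (hv (x, t))
  conv_lhs => rw [funext h.cx_eq]
  refine ((((hut.const_mul 2).fun_mul hvt).const_add κ).fun_sub
    ((hvt.fun_pow 2).const_mul κ)).deriv.trans ?_
  ring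

lemma cx_ct (h : IsRiccatiSolution κ u v) (hu : ContDiff ℝ 3 u) (hv : Differentiable ℝ v)
    (w : ℝ × ℝ) :
    cx (ct v) w =
      4 * κ * u w * cx u w + 2 * κ * cx (cx u) w
      + 2 * (6 * u w ^ 2 * cx u w - 4 * κ ^ 2 * cx u w - cx (cx (cx u)) w) * v w
      - (4 * κ * u w * cx u w - 2 * κ * cx (cx u) w) * v w ^ 2
      + 2 * (2 * u w ^ 3 - 4 * κ ^ 2 * u w - cx (cx u) w
        - (2 * κ * u w ^ 2 - 4 * κ ^ 3 - 2 * κ * cx u w) * v w) * cx v w := by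
  obtain ⟨x, t⟩ := w
  have hux : ContDiff ℝ 2 (cx u) := contDiff_cx hu (by norm_num)
  have huxx : ContDiff ℝ 1 (cx (cx u)) := contDiff_cx hux (by norm_num)
  have du := hasDerivAt_cx (hu.differentiable (by norm_num) (x, t))
  have dux := hasDerivAt_cx (hux.differentiable (by norm_num) (x, t))
  have duxx := hasDerivAt_cx (huxx.differentiable (by norm_num) (x, t))
  have dv := hasDerivAt_cx (hv (x, t))
  have dA := ((du.fun_pow 2).const_mul (2 * κ)).sub_const (4 * κ ^ 3)
  have dC := ((((du.fun_pow 3).const_mul 2).fun_sub (du.const_mul (4 * κ ^ 2))).fun_sub duxx)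
  have dD := dux.const_mul (2 * κ)
  conv_lhs => rw [funext h.ct_eq]
  refine (((dA.fun_add dD).fun_add ((dC.const_mul 2).fun_mul dv)).fun_sub
    ((dA.fun_sub dD).fun_mul (dv.fun_pow 2))).deriv.trans ?_
  ring

theorem isMKdVSolution (h : IsRiccatiSolution κ u v) (hu : ContDiff ℝ 3 u) (hv : ContDiff ℝ 2 v)
    (hv₀ : ∀ w, v w ≠ 0) : IsMKdVSolution u := by
  intro w
  have hv₁ : Differentiable ℝ v := hv.differentiable (by norm_num)
  have hcompat : ct (cx v) w - cx (ct v) w = 0 := by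
    rw [cx_ct_eq_ct_cx hv, sub_self]
  rw [h.ct_cx (hu.differentiable (by norm_num)) hv₁, h.cx_ct hu hv₁, h.cx_eq, h.ct_eq] at hcompat
  refine (mul_eq_zero_iff_left (mul_ne_zero two_ne_zero (hv₀ w))).mp ?_
  linear_combination hcompat

end IsRiccatiSolution

theorem darboux_transform_solves_mkdv_general {n : WithTop ℕ∞} (hn : 3 ≤ n)
    (hu : ContDiff ℝ n u) (hp : ContDiff ℝ n p) (hq : ContDiff ℝ n q)
    (hLax : IsLaxSolution ζ u p q) (hne : ∀ w, p w ^ 2 ≠ q w ^ 2) :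
    ContDiff ℝ n (darbouxTransform ζ u p q) ∧ IsMKdVSolution (darbouxTransform ζ u p q) := by
  have hû := contDiff_darbouxTransform (ζ := ζ) hu hp hq hne
  refine ⟨hû, ?_⟩
  have hsub : ∀ w, p w - q w ≠ 0 := fun w h => hne w (by rw [sub_eq_zero.mp h])
  have hadd : ∀ w, p w + q w ≠ 0 := fun w h => hne w (by rw [eq_neg_of_add_eq_zero_left h, neg_sq])
  have hn₀ : n ≠ 0 := by
    rintro rfl
    simp at hn
  have hux : ContDiff ℝ 2 (cx u) := contDiff_cx (hu.of_le hn) (by norm_num)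
  have hv : ContDiff ℝ n fun w => (p w + q w) / (p w - q w) :=
    contDiff_div (hp.add hq) (hp.sub hq) hsub
  have hv₀ : ∀ w, (p w + q w) / (p w - q w) ≠ 0 := fun w => div_ne_zero (hadd w) (hsub w)
  have hriccati := hLax.isRiccatiSolution (hp.differentiable hn₀) (hq.differentiable hn₀)
    fun w => sub_ne_zero.mp (hsub w)
  have hflip := hriccati.neg_backlundTransform (hu.differentiable hn₀)
    (hux.differentiable two_ne_zero) (hv.differentiable hn₀) hv₀
  rw [← darbouxTransform_eq_backlundTransform hne] at hflip
  exact hflip.isMKdVSolution (hû.of_le hn) (hv.of_le (le_trans (by norm_num) hn)) hv₀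

end

/-- The one-fold Darboux transformation of a smooth solution `u` of the defocusing mKdV
equation, generated by a solution `(p, q)` of the Lax system with real spectral parameter
`ζ` such that `p² ≠ q²` everywhere, is again a smooth (complex-valued) solution
of the mKdV equation. -/
theorem darboux_transform_solves_mkdv
    (u : ℝ × ℝ → ℝ) (hu : ContDiff ℝ (⊤ : ℕ∞) u)
    (hmkdv : ∀ p : ℝ × ℝ, ut u p - 6 * (u p) ^ 2 * ux u p + ux (ux (ux u)) p = 0)
    (ζ : ℝ) (pf qf : ℝ × ℝ → ℂ)
    (hpf : ContDiff ℝ (⊤ : ℕ∞) pf) (hqf : ContDiff ℝ (⊤ : ℕ∞) qf)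
    (hLax1 : ∀ w : ℝ × ℝ, cx pf w = Complex.I * (ζ : ℂ) * pf w + (u w : ℂ) * qf w)
    (hLax2 : ∀ w : ℝ × ℝ, cx qf w = -(Complex.I * (ζ : ℂ)) * qf w + (u w : ℂ) * pf w)
    (hLax3 : ∀ w : ℝ × ℝ, ct pf w =
      (4 * Complex.I * (ζ : ℂ) ^ 3 + 2 * Complex.I * (ζ : ℂ) * (u w : ℂ) ^ 2) * pf w +
      (4 * (ζ : ℂ) ^ 2 * (u w : ℂ) - 2 * Complex.I * (ζ : ℂ) * (ux u w : ℂ)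
        + 2 * (u w : ℂ) ^ 3 - (ux (ux u) w : ℂ)) * qf w)
    (hLax4 : ∀ w : ℝ × ℝ, ct qf w =
      (4 * (ζ : ℂ) ^ 2 * (u w : ℂ) + 2 * Complex.I * (ζ : ℂ) * (ux u w : ℂ)
        + 2 * (u w : ℂ) ^ 3 - (ux (ux u) w : ℂ)) * pf w +
      (-(4 * Complex.I * (ζ : ℂ) ^ 3) - 2 * Complex.I * (ζ : ℂ) * (u w : ℂ) ^ 2) * qf w)
    (hne : ∀ w : ℝ × ℝ, pf w ^ 2 ≠ qf w ^ 2) :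
    ContDiff ℝ (⊤ : ℕ∞) (fun w : ℝ × ℝ =>
        (u w : ℂ) - 4 * Complex.I * (ζ : ℂ) * pf w * qf w / (pf w ^ 2 - qf w ^ 2)) ∧
    (∀ w : ℝ × ℝ,
      ct (fun w : ℝ × ℝ =>
          (u w : ℂ) - 4 * Complex.I * (ζ : ℂ) * pf w * qf w / (pf w ^ 2 - qf w ^ 2)) w
      - 6 * ((u w : ℂ) - 4 * Complex.I * (ζ : ℂ) * pf w * qf w / (pf w ^ 2 - qf w ^ 2)) ^ 2
          * cx (fun w : ℝ × ℝ =>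
              (u w : ℂ) - 4 * Complex.I * (ζ : ℂ) * pf w * qf w / (pf w ^ 2 - qf w ^ 2)) w
      + cx (cx (cx (fun w : ℝ × ℝ =>
          (u w : ℂ) - 4 * Complex.I * (ζ : ℂ) * pf w * qf w / (pf w ^ 2 - qf w ^ 2)))) w
      = 0) := by
  exact darboux_transform_solves_mkdv_general (by norm_cast) (Complex.ofRealCLM.contDiff.comp hu)
    hpf hqf ⟨hLax1, hLax2, by simpa only [cx_ofReal], by simpa only [cx_ofReal]⟩ hne

end
end

section
/- Let k ∈ (0,1). The function u(x,t) := k·sn(x + (1+k²)t; k) is smooth on ℝ × ℝ and satisfies the mKdV equation u_t − 6u²u_x + u_xxx = 0 at every point (x,t). -/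
noncomputable section

/-!
For a wave `u(x, t) = φ(x + vt)` the mKdV equation becomes `vφ' - 6φ²φ' + φ''' = 0`, which
integrates once to `φ'' = 2φ³ - vφ + a`. The first integrals `s² + c²` and `k²s² + d²` of the Jacobi
system turn `s'' = -s (d² + k²c²)` into exactly such an equation for `φ = k s`, and their values
determine `v`. Smoothness is the regularity of solutions of an ODE with smooth right-hand side.
-/

open Set
open scoped ContDiff

theorem contDiff_of_isIntegralCurve {E : Type*} [NormedAddCommGroup E] [NormedSpace ℝ E]
    [CompleteSpace E] {γ : ℝ → E} {f : ℝ → E → E} {n : ℕ∞}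
    (hf : ContDiff ℝ n (Function.uncurry f)) (hγ : IsIntegralCurve γ f) : ContDiff ℝ n γ := by
  refine contDiff_iff_contDiffAt.2 fun t => ?_
  have h_Icc : ContDiffOn ℝ n γ (Icc (t - 1) (t + 1)) :=
    ODE.contDiffOn_enat_Icc_of_hasDerivWithinAt hf.contDiffOn
      (fun r _ => (hγ r).hasDerivWithinAt) (mapsTo_univ _ _)
  exact h_Icc.contDiffAt (Icc_mem_nhds (by linarith) (by linarith))

/-- Smooth solutions on `ℝ × ℝ` of the defocusing mKdV equation `u_t - 6u²u_x + u_xxx = 0`.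
Smoothness is part of the definition, so `ux` and `ut` never take junk values. -/
def IsSmoothMKdVSolution (u : ℝ × ℝ → ℝ) : Prop :=
  ContDiff ℝ ∞ u ∧ ∀ p, ut u p - 6 * u p ^ 2 * ux u p + ux (ux (ux u)) p = 0

/-- The wave `(x, t) ↦ f (x + vt)` with profile `f`; for `v > 0` it moves to the left. -/
def travellingWave (v : ℝ) (f : ℝ → ℝ) (w : ℝ × ℝ) : ℝ := f (w.1 + v * w.2)

section TravellingWave

variable {v a : ℝ} {f φ ψ : ℝ → ℝ}

theorem ux_travellingWave : ux (travellingWave v f) = travellingWave v (deriv f) :=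
  funext fun p => deriv_comp_add_const f (v * p.2) p.1

theorem ut_travellingWave (p : ℝ × ℝ) :
    ut (travellingWave v f) p = v * travellingWave v (deriv f) p :=
  calc ut (travellingWave v f) p
      = v * deriv (fun y => f (p.1 + y)) (v * p.2) :=
        deriv_comp_mul_left v (fun y => f (p.1 + y)) p.2
    _ = v * travellingWave v (deriv f) p := by rw [deriv_comp_const_add, travellingWave]

theorem isSmoothMKdVSolution_travellingWave (hf : ContDiff ℝ ∞ f)
    (h_ode : ∀ z, v * deriv f z - 6 * f z ^ 2 * deriv f z + deriv (deriv (deriv f)) z = 0) :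
    IsSmoothMKdVSolution (travellingWave v f) := by
  refine ⟨hf.comp (by fun_prop), fun p => ?_⟩
  rw [ut_travellingWave, ux_travellingWave, ux_travellingWave, ux_travellingWave]
  exact h_ode (p.1 + v * p.2)

theorem contDiff_of_deriv_deriv_eq_cubic (hφ : ∀ z, HasDerivAt φ (ψ z) z)
    (hψ : ∀ z, HasDerivAt ψ (2 * φ z ^ 3 - v * φ z + a) z) : ContDiff ℝ ∞ φ := by
  have h_curve : IsIntegralCurve (fun z => (φ z, ψ z))
      (fun _ q => (q.2, 2 * q.1 ^ 3 - v * q.1 + a)) :=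
    fun z => (hφ z).prodMk (hψ z)
  exact (contDiff_of_isIntegralCurve (n := ⊤) (by unfold Function.uncurry; fun_prop) h_curve).fst

theorem isSmoothMKdVSolution_travellingWave_of_deriv_deriv_eq_cubic
    (hφ : ∀ z, HasDerivAt φ (ψ z) z)
    (hψ : ∀ z, HasDerivAt ψ (2 * φ z ^ 3 - v * φ z + a) z) :
    IsSmoothMKdVSolution (travellingWave v φ) := by
  refine isSmoothMKdVSolution_travellingWave (contDiff_of_deriv_deriv_eq_cubic hφ hψ) fun z => ?_
  have h_deriv : deriv φ = ψ := funext fun y => (hφ y).deriv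
  have h_deriv₂ : deriv ψ = fun y => 2 * φ y ^ 3 - v * φ y + a := funext fun y => (hψ y).deriv
  have h_deriv₃ : HasDerivAt (fun y => 2 * φ y ^ 3 - v * φ y + a)
      ((6 * φ z ^ 2 - v) * ψ z) z := by
    have h_cubic := (((hφ z).fun_pow 3).const_mul 2).fun_sub ((hφ z).const_mul v)
    refine (h_cubic.add_const a).congr_deriv ?_
    push_cast
    ring
  rw [h_deriv, h_deriv₂, h_deriv₃.deriv]
  ring

end TravellingWave

/-- `s`, `c`, `d` solve the differential equations of the Jacobi elliptic functions with modulus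
`k`. The initial values are left free; `0, 1, 1` at `0` give `sn`, `cn`, `dn`. -/
structure IsJacobiSystem (k : ℝ) (s c d : ℝ → ℝ) : Prop where
  hasDerivAt_s : ∀ z, HasDerivAt s (c z * d z) z
  hasDerivAt_c : ∀ z, HasDerivAt c (-(s z * d z)) z
  hasDerivAt_d : ∀ z, HasDerivAt d (-(k ^ 2 * s z * c z)) z

namespace IsJacobiSystem

variable {k : ℝ} {s c d : ℝ → ℝ}

theorem s_sq_add_c_sq_eq (h : IsJacobiSystem k s c d) (y z : ℝ) :
    s y ^ 2 + c y ^ 2 = s z ^ 2 + c z ^ 2 := by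
  have h_deriv (x : ℝ) : HasDerivAt (fun x => s x ^ 2 + c x ^ 2) 0 x := by
    refine (((h.hasDerivAt_s x).fun_pow 2).fun_add ((h.hasDerivAt_c x).fun_pow 2)).congr_deriv ?_
    ring
  exact is_const_of_deriv_eq_zero (fun x => (h_deriv x).differentiableAt)
    (fun x => (h_deriv x).deriv) y z

theorem k_sq_mul_s_sq_add_d_sq_eq (h : IsJacobiSystem k s c d) (y z : ℝ) :
    k ^ 2 * s y ^ 2 + d y ^ 2 = k ^ 2 * s z ^ 2 + d z ^ 2 := by
  have h_deriv (x : ℝ) : HasDerivAt (fun x => k ^ 2 * s x ^ 2 + d x ^ 2) 0 x := by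
    refine ((((h.hasDerivAt_s x).fun_pow 2).const_mul (k ^ 2)).fun_add
      ((h.hasDerivAt_d x).fun_pow 2)).congr_deriv ?_
    ring
  exact is_const_of_deriv_eq_zero (fun x => (h_deriv x).differentiableAt)
    (fun x => (h_deriv x).deriv) y z

theorem hasDerivAt_c_mul_d (h : IsJacobiSystem k s c d) (y z : ℝ) :
    HasDerivAt (fun x => c x * d x)
      (2 * k ^ 2 * s z ^ 3 - (d y ^ 2 + k ^ 2 * c y ^ 2 + 2 * k ^ 2 * s y ^ 2) * s z) z := by
  refine ((h.hasDerivAt_c z).fun_mul (h.hasDerivAt_d z)).congr_deriv ?_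
  linear_combination
    k ^ 2 * s z * h.s_sq_add_c_sq_eq y z + s z * h.k_sq_mul_s_sq_add_d_sq_eq y z

end IsJacobiSystem

theorem snoidal_wave_solves_mkdv_general {k v : ℝ} {s c d : ℝ → ℝ} (h : IsJacobiSystem k s c d)
    (hv : v = d 0 ^ 2 + k ^ 2 * c 0 ^ 2 + 2 * k ^ 2 * s 0 ^ 2) :
    IsSmoothMKdVSolution (fun w => k * s (w.1 + v * w.2)) := by
  refine isSmoothMKdVSolution_travellingWave_of_deriv_deriv_eq_cubic
    (φ := fun z => k * s z) (a := 0) (fun z => (h.hasDerivAt_s z).const_mul k) fun z => ?_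
  refine ((h.hasDerivAt_c_mul_d 0 z).const_mul k).congr_deriv ?_
  rw [hv]
  ring

/-- For `k ∈ (0,1)` and the Jacobi elliptic function `sn(·;k)` (characterized as the first
component of the unique global solution of `s' = c·d, c' = −s·d, d' = −k²·s·c` with
`s(0)=0, c(0)=1, d(0)=1`), the snoidal traveling wave `u(x,t) = k·sn(x + (1+k²)t; k)`
is smooth and solves the defocusing mKdV equation `u_t − 6u²u_x + u_xxx = 0`. -/
theorem snoidal_wave_solves_mkdv
    (k : ℝ) (hk : k ∈ Set.Ioo (0 : ℝ) 1)
    (sn cn dn : ℝ → ℝ)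
    (hsn : ∀ x, HasDerivAt sn (cn x * dn x) x)
    (hcn : ∀ x, HasDerivAt cn (-(sn x * dn x)) x)
    (hdn : ∀ x, HasDerivAt dn (-(k ^ 2 * sn x * cn x)) x)
    (hsn0 : sn 0 = 0) (hcn0 : cn 0 = 1) (hdn0 : dn 0 = 1) :
    ContDiff ℝ (⊤ : ℕ∞) (fun w : ℝ × ℝ => k * sn (w.1 + (1 + k ^ 2) * w.2)) ∧
    (∀ p : ℝ × ℝ,
      ut (fun w : ℝ × ℝ => k * sn (w.1 + (1 + k ^ 2) * w.2)) p
      - 6 * (k * sn (p.1 + (1 + k ^ 2) * p.2)) ^ 2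
          * ux (fun w : ℝ × ℝ => k * sn (w.1 + (1 + k ^ 2) * w.2)) p
      + ux (ux (ux (fun w : ℝ × ℝ => k * sn (w.1 + (1 + k ^ 2) * w.2)))) p = 0) :=
  snoidal_wave_solves_mkdv_general ⟨hsn, hcn, hdn⟩ (by simp [hsn0, hcn0, hdn0])

end
end

section
/- Let k ∈ (0,1), ζ ∈ ℝ, ω ∈ ℂ, and let a, b ∈ ℝ satisfy b² = a⁴ − (1+k²)a² + k² (the values φ₀(x), φ₀'(x) of a function satisfying the first-order invariant, with the second-order equation φ₀'' = 2φ₀³ − (1+k²)φ₀ substituted). Then the determinant of the 2×2 complex matrix [[iζ(4ζ² + 2a² − 1 − k²) − ω, 4ζ²a − 2iζb],[4ζ²a + 2iζb, −iζ(4ζ² + 2a² − 1 − k²) − ω]] equals ω² + 16ζ²·P(ζ), where P(ζ) := ζ⁴ − (1/2)(1+k²)ζ² + (1/16)(1−k²)². In particular the determinant vanishes if and only if ω² = −16ζ²P(ζ), and moreover P(ζ) = (ζ² − ζ₊²)(ζ² − ζ₋²) with ζ₊ = (1+k)/2 and ζ₋ = (1−k)/2. -/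
/-!
The compatibility matrix is `V - ω` for a traceless `2 × 2` matrix `V`, so its determinant is
`ω² + det V`. Expanding, `det V = ζ² ((4ζ² + 2a² - 1 - k²)² - 16ζ²a² - 4b²)`, and the first-order
invariant turns the bracket into a polynomial in `ζ` and `k` alone, namely `16 P(ζ)`.
-/

open Matrix

theorem det_sub_scalar_fin_two {R : Type*} [CommRing R] (M : Matrix (Fin 2) (Fin 2) R) (ω : R) :
    (M - scalar (Fin 2) ω).det = ω ^ 2 - M.trace * ω + M.det := by
  simp only [det_fin_two, trace_fin_two, scalar_apply, Matrix.sub_apply, diagonal_apply_eq,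
    ne_eq, zero_ne_one, one_ne_zero, not_false_eq_true, diagonal_apply_ne, sub_zero]
  ring

section TimeMatrix

variable {R : Type*} [CommRing R]

/-- The matrix `V` of the time evolution `ψ_t = V ψ` in the Lax system of the defocusing mKdV
equation on the snoidal potential `φ₀`, in the travelling frame. Here `i` plays the role of the
imaginary unit, `a` and `b` are the values of `φ₀` and `φ₀'` at a point, and `φ₀''` has been
eliminated through the second-order equation. -/
def laxTimeMatrix (i k ζ a b : R) : Matrix (Fin 2) (Fin 2) R :=
  !![i * ζ * (4 * ζ ^ 2 + 2 * a ^ 2 - 1 - k ^ 2), 4 * ζ ^ 2 * a - 2 * i * ζ * b;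
     4 * ζ ^ 2 * a + 2 * i * ζ * b, -(i * ζ * (4 * ζ ^ 2 + 2 * a ^ 2 - 1 - k ^ 2))]

theorem laxTimeMatrix_sub_scalar (i k ζ a b ω : R) :
    laxTimeMatrix i k ζ a b - scalar (Fin 2) ω =
      !![i * ζ * (4 * ζ ^ 2 + 2 * a ^ 2 - 1 - k ^ 2) - ω, 4 * ζ ^ 2 * a - 2 * i * ζ * b;
         4 * ζ ^ 2 * a + 2 * i * ζ * b,
         -(i * ζ * (4 * ζ ^ 2 + 2 * a ^ 2 - 1 - k ^ 2)) - ω] := by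
  ext r c
  fin_cases r <;> fin_cases c <;> simp [laxTimeMatrix]

theorem trace_laxTimeMatrix (i k ζ a b : R) : (laxTimeMatrix i k ζ a b).trace = 0 := by
  rw [laxTimeMatrix, trace_fin_two_of, add_neg_cancel]

theorem det_laxTimeMatrix {i : R} (hi : i ^ 2 = -1) (k ζ a b : R) :
    (laxTimeMatrix i k ζ a b).det =
      ζ ^ 2 * ((4 * ζ ^ 2 + 2 * a ^ 2 - 1 - k ^ 2) ^ 2 - 16 * ζ ^ 2 * a ^ 2 - 4 * b ^ 2) := by
  rw [laxTimeMatrix, det_fin_two_of]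
  linear_combination
    (4 * ζ ^ 2 * b ^ 2 - ζ ^ 2 * (4 * ζ ^ 2 + 2 * a ^ 2 - 1 - k ^ 2) ^ 2) * hi

theorem sq_sub_sub_eq_of_invariant {k a b : R}
    (hab : b ^ 2 = a ^ 4 - (1 + k ^ 2) * a ^ 2 + k ^ 2) (ζ : R) :
    (4 * ζ ^ 2 + 2 * a ^ 2 - 1 - k ^ 2) ^ 2 - 16 * ζ ^ 2 * a ^ 2 - 4 * b ^ 2 =
      16 * ζ ^ 4 - 8 * (1 + k ^ 2) * ζ ^ 2 + (1 - k ^ 2) ^ 2 := by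
  linear_combination -4 * hab

end TimeMatrix

section SpectralPolynomial

variable {K : Type*} [Field K]

/-- The polynomial `P(ζ)` whose zeros `±(1 ± k)/2` are the band edges of the Lax spectrum of the
snoidal potential, as a function of the modulus `k` and the spectral parameter `ζ`. The
coefficients involve `1 / 2`, so it is meaningful only when `2 ≠ 0` in `K`. -/
def laxSpectralPolynomial (k ζ : K) : K :=
  ζ ^ 4 - (1 / 2) * (1 + k ^ 2) * ζ ^ 2 + (1 / 16) * (1 - k ^ 2) ^ 2

variable [NeZero (2 : K)]

theorem sixteen_mul_laxSpectralPolynomial (k ζ : K) :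
    16 * laxSpectralPolynomial k ζ =
      16 * ζ ^ 4 - 8 * (1 + k ^ 2) * ζ ^ 2 + (1 - k ^ 2) ^ 2 := by
  have h2 : (2 : K) ≠ 0 := two_ne_zero
  have h16 : (16 : K) = 2 ^ 4 := by norm_num
  rw [laxSpectralPolynomial, h16]
  field_simp
  ring

theorem laxSpectralPolynomial_eq_mul (k ζ : K) :
    laxSpectralPolynomial k ζ =
      (ζ ^ 2 - ((1 + k) / 2) ^ 2) * (ζ ^ 2 - ((1 - k) / 2) ^ 2) := by
  have h2 : (2 : K) ≠ 0 := two_ne_zero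
  have h16 : (16 : K) = 2 ^ 4 := by norm_num
  rw [laxSpectralPolynomial, h16]
  field_simp
  ring

theorem det_laxTimeMatrix_of_invariant {i : K} (hi : i ^ 2 = -1) {k a b : K}
    (hab : b ^ 2 = a ^ 4 - (1 + k ^ 2) * a ^ 2 + k ^ 2) (ζ : K) :
    (laxTimeMatrix i k ζ a b).det = 16 * ζ ^ 2 * laxSpectralPolynomial k ζ := by
  rw [det_laxTimeMatrix hi, sq_sub_sub_eq_of_invariant hab, ← sixteen_mul_laxSpectralPolynomial]
  ring

theorem lax_time_evolution_determinant_general {i : K} (hi : i ^ 2 = -1) {k a b : K}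
    (hab : b ^ 2 = a ^ 4 - (1 + k ^ 2) * a ^ 2 + k ^ 2) (ζ ω : K) :
    (laxTimeMatrix i k ζ a b - scalar (Fin 2) ω).det =
        ω ^ 2 + 16 * ζ ^ 2 * laxSpectralPolynomial k ζ ∧
      ((laxTimeMatrix i k ζ a b - scalar (Fin 2) ω).det = 0 ↔
        ω ^ 2 = -(16 * ζ ^ 2 * laxSpectralPolynomial k ζ)) ∧
      laxSpectralPolynomial k ζ =
        (ζ ^ 2 - ((1 + k) / 2) ^ 2) * (ζ ^ 2 - ((1 - k) / 2) ^ 2) := by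
  have hdet : (laxTimeMatrix i k ζ a b - scalar (Fin 2) ω).det =
      ω ^ 2 + 16 * ζ ^ 2 * laxSpectralPolynomial k ζ := by
    rw [det_sub_scalar_fin_two, trace_laxTimeMatrix, zero_mul, sub_zero,
      det_laxTimeMatrix_of_invariant hi hab]
  exact ⟨hdet, by rw [hdet, add_eq_zero_iff_eq_neg], laxSpectralPolynomial_eq_mul k ζ⟩

end SpectralPolynomial

/-- The determinant of the algebraic compatibility matrix of the time evolution of the
Lax system on the snoidal potential equals `ω² + 16ζ²P(ζ)`, with
`P(ζ) = ζ⁴ − (1/2)(1+k²)ζ² + (1/16)(1−k²)²`; in particular it vanishes iff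
`ω² = −16ζ²P(ζ)`, and `P(ζ) = (ζ² − ζ₊²)(ζ² − ζ₋²)` with `ζ₊ = (1+k)/2`, `ζ₋ = (1−k)/2`. -/
theorem lax_time_evolution_determinant
    (k : ℝ) (hk : k ∈ Set.Ioo (0 : ℝ) 1) (ζ : ℝ) (ω : ℂ) (a b : ℝ)
    (hab : b ^ 2 = a ^ 4 - (1 + k ^ 2) * a ^ 2 + k ^ 2) :
    (Matrix.det
      !![Complex.I * (ζ : ℂ) * (4 * (ζ : ℂ) ^ 2 + 2 * (a : ℂ) ^ 2 - 1 - (k : ℂ) ^ 2) - ω,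
         4 * (ζ : ℂ) ^ 2 * (a : ℂ) - 2 * Complex.I * (ζ : ℂ) * (b : ℂ);
         4 * (ζ : ℂ) ^ 2 * (a : ℂ) + 2 * Complex.I * (ζ : ℂ) * (b : ℂ),
         -(Complex.I * (ζ : ℂ) * (4 * (ζ : ℂ) ^ 2 + 2 * (a : ℂ) ^ 2 - 1 - (k : ℂ) ^ 2)) - ω]
      = ω ^ 2 + 16 * (ζ : ℂ) ^ 2 *
          ((ζ : ℂ) ^ 4 - (1 / 2) * (1 + (k : ℂ) ^ 2) * (ζ : ℂ) ^ 2
            + (1 / 16) * (1 - (k : ℂ) ^ 2) ^ 2)) ∧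
    (Matrix.det
      !![Complex.I * (ζ : ℂ) * (4 * (ζ : ℂ) ^ 2 + 2 * (a : ℂ) ^ 2 - 1 - (k : ℂ) ^ 2) - ω,
         4 * (ζ : ℂ) ^ 2 * (a : ℂ) - 2 * Complex.I * (ζ : ℂ) * (b : ℂ);
         4 * (ζ : ℂ) ^ 2 * (a : ℂ) + 2 * Complex.I * (ζ : ℂ) * (b : ℂ),
         -(Complex.I * (ζ : ℂ) * (4 * (ζ : ℂ) ^ 2 + 2 * (a : ℂ) ^ 2 - 1 - (k : ℂ) ^ 2)) - ω]
      = 0 ↔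
      ω ^ 2 = -(16 * (ζ : ℂ) ^ 2 *
          ((ζ : ℂ) ^ 4 - (1 / 2) * (1 + (k : ℂ) ^ 2) * (ζ : ℂ) ^ 2
            + (1 / 16) * (1 - (k : ℂ) ^ 2) ^ 2))) ∧
    (ζ ^ 4 - (1 / 2) * (1 + k ^ 2) * ζ ^ 2 + (1 / 16) * (1 - k ^ 2) ^ 2
      = (ζ ^ 2 - ((1 + k) / 2) ^ 2) * (ζ ^ 2 - ((1 - k) / 2) ^ 2)) := by
  obtain ⟨hdet, hdet_zero, -⟩ := lax_time_evolution_determinant_general Complex.I_sq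
    (k := (k : ℂ)) (a := a) (b := b) (mod_cast hab) ζ ω
  rw [laxTimeMatrix_sub_scalar] at hdet hdet_zero
  exact ⟨hdet, hdet_zero, laxSpectralPolynomial_eq_mul k ζ⟩
end

section
/- Let k ∈ ℝ and let s, c, d be real numbers with c² = 1 − s², d² = 1 − k²s², and 1 + ks² ≠ 0. Define ζ := ((1+k)/2)·(1 − ks²)/(1 + ks²) and ω := −2k(1+k)²·(1 − ks²)·s·c·d/(1 + ks²)³. Then ω² = −16ζ²·(ζ⁴ − (1/2)(1+k²)ζ² + (1/16)(1−k²)²). -/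
/-!
The quartic `P` factors as `(ζ² - ((1+k)/2)²)(ζ² - ((1-k)/2)²)`. At the given `ζ`, each factor is a
difference of squares: the first is `-k(1+k)²s²/(1+ks²)²`, while the second is
`k(1-s²)(1-k²s²)/(1+ks²)²`, that is, `k c²d²/(1+ks²)²`. Hence `-16ζ²P(ζ)` is a perfect square.
-/

section Field

variable {K : Type*} [Field K]

/-- The quartic `P(ζ) = ζ⁴ - (1+k²)ζ²/2 + (1-k²)²/16` whose roots are `±(1+k)/2` and `±(1-k)/2`. -/
def spectralQuartic (k z : K) : K :=
  z ^ 4 - (1 / 2) * (1 + k ^ 2) * z ^ 2 + (1 / 16) * (1 - k ^ 2) ^ 2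

/-- The spectral parameter `ζ` given by the characteristic equation, where `s` stands for
`sn(α; k)`. It is meaningful only for `1 + k s² ≠ 0`. -/
def spectralParameter (k s : K) : K :=
  ((1 + k) / 2) * (1 - k * s ^ 2) / (1 + k * s ^ 2)

/-- The temporal exponent `ω` of the dark-breather eigenfunctions, where `s`, `c`, `d` stand for
`sn(α; k)`, `cn(α; k)`, `dn(α; k)`. It is meaningful only for `1 + k s² ≠ 0`. -/
def temporalExponent (k s c d : K) : K :=
  -(2 * k * (1 + k) ^ 2 * (1 - k * s ^ 2) * s * c * d / (1 + k * s ^ 2) ^ 3)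

variable [NeZero (2 : K)] {k s c d : K}

theorem spectralQuartic_eq_mul (k z : K) :
    spectralQuartic k z = (z ^ 2 - ((1 + k) / 2) ^ 2) * (z ^ 2 - ((1 - k) / 2) ^ 2) := by
  have sixteen_eq : (16 : K) = 2 ^ 4 := by norm_num
  rw [spectralQuartic, sixteen_eq]
  field_simp
  ring

theorem spectralParameter_sq_sub_one_add_div_two_sq (hne : 1 + k * s ^ 2 ≠ 0) :
    spectralParameter k s ^ 2 - ((1 + k) / 2) ^ 2 =
      -(k * (1 + k) ^ 2 * s ^ 2 / (1 + k * s ^ 2) ^ 2) := by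
  rw [spectralParameter]
  field_simp
  ring

theorem spectralParameter_sq_sub_one_sub_div_two_sq
    (hc : c ^ 2 = 1 - s ^ 2) (hd : d ^ 2 = 1 - k ^ 2 * s ^ 2) (hne : 1 + k * s ^ 2 ≠ 0) :
    spectralParameter k s ^ 2 - ((1 - k) / 2) ^ 2 =
      k * c ^ 2 * d ^ 2 / (1 + k * s ^ 2) ^ 2 := by
  rw [spectralParameter, hc, hd]
  field_simp
  ring

theorem omega_squared_identity_general
    (hc : c ^ 2 = 1 - s ^ 2) (hd : d ^ 2 = 1 - k ^ 2 * s ^ 2) (hne : 1 + k * s ^ 2 ≠ 0) :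
    temporalExponent k s c d ^ 2 =
      -(16 * spectralParameter k s ^ 2 * spectralQuartic k (spectralParameter k s)) := by
  rw [spectralQuartic_eq_mul, spectralParameter_sq_sub_one_add_div_two_sq hne,
    spectralParameter_sq_sub_one_sub_div_two_sq hc hd hne, temporalExponent, spectralParameter]
  field_simp
  ring

end Field

/-- The temporal exponent `ω = −2k(1+k)²(1−ks²)·s·c·d/(1+ks²)³` of the dark-breather
eigenfunctions is a square root of `−16ζ²P(ζ)`, where
`ζ = ((1+k)/2)(1−ks²)/(1+ks²)` and `P(ζ) = ζ⁴ − (1+k²)ζ²/2 + (1−k²)²/16`,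
given the fundamental relations `c² = 1 − s²` and `d² = 1 − k²s²`. -/
theorem omega_squared_identity
    (k s c d : ℝ)
    (hc : c ^ 2 = 1 - s ^ 2) (hd : d ^ 2 = 1 - k ^ 2 * s ^ 2)
    (hne : 1 + k * s ^ 2 ≠ 0) :
    (-(2 * k * (1 + k) ^ 2 * (1 - k * s ^ 2) * s * c * d / (1 + k * s ^ 2) ^ 3)) ^ 2 =
      -(16 * (((1 + k) / 2) * (1 - k * s ^ 2) / (1 + k * s ^ 2)) ^ 2 *
        ((((1 + k) / 2) * (1 - k * s ^ 2) / (1 + k * s ^ 2)) ^ 4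
          - (1 / 2) * (1 + k ^ 2) * (((1 + k) / 2) * (1 - k * s ^ 2) / (1 + k * s ^ 2)) ^ 2
          + (1 / 16) * (1 - k ^ 2) ^ 2)) :=
  omega_squared_identity_general hc hd hne
end
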